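/- arXiv:1506.04478 — 3 statements merged into one kernel-verified Lean document; each statement's English description precedes it below -/
import Mathlib

section
/- Let k be a field and f, g separable cubic polynomials in k[x]. There exists a linear fractional transformation of P^1(k) (an element of PGL_2(k)) mapping the set of roots of f (in an algebraic closure) bijectively onto the set of roots of g if and only if f and g have the same number of roots in k. -/
open Polynomial


lemma aux_fix (k K : Type*) [Field k] [Fintype k] [Field K] [Algebra k K] (x : K)
    (hx : x ^ Fintype.card k = x) : ∃ c : k, algebraMap k K c = x := by
  have h1 : (X ^ Fintype.card k - X : k[X]) = ∏ a : k, (X - C a) := by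
    have hq : 1 < Fintype.card k := Fintype.one_lt_card
    have hm : (X ^ Fintype.card k - X : k[X]).Monic :=
      monic_X_pow_sub (by rw [degree_X]; exact_mod_cast hq)
    have hr := FiniteField.roots_X_pow_card_sub_X k
    have := prod_multiset_X_sub_C_of_monic_of_roots_card_eq hm (by
      rw [hr, FiniteField.X_pow_card_sub_X_natDegree_eq k hq]; simp)
    rw [hr] at this
    exact this.symm
  have h2 := congrArg (aeval x) h1
  simp only [map_sub, map_pow, aeval_X, map_prod, aeval_C, hx, sub_self] at h2
  obtain ⟨c, -, hc⟩ := Finset.prod_eq_zero_iff.1 h2.symm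
  exact ⟨c, (sub_eq_zero.1 hc).symm⟩

lemma aux_order {K : Type*} [DecidableEq K] (φ : K → K) (hφ : Function.Injective φ) (S : Finset K)
    (hS : S.card = 3) (hm : ∀ x ∈ S, φ x ∈ S) :
    ∃ a b c, a ≠ b ∧ a ≠ c ∧ b ≠ c ∧ S = {a, b, c} ∧
      (((S.filter (fun x => φ x = x)).card = 3 ∧ φ a = a ∧ φ b = b ∧ φ c = c) ∨
       ((S.filter (fun x => φ x = x)).card = 1 ∧ φ a = a ∧ φ b = c ∧ φ c = b) ∨
       ((S.filter (fun x => φ x = x)).card = 0 ∧ φ a = b ∧ φ b = c ∧ φ c = a)) := by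
  obtain ⟨a, b, c, hab, hac, hbc, rfl⟩ := Finset.card_eq_three.1 hS
  have ha := hm a (by simp)
  have hb := hm b (by simp)
  have hc := hm c (by simp)
  simp only [Finset.mem_insert, Finset.mem_singleton] at ha hb hc
  have nab : φ a ≠ φ b := fun h => hab (hφ h)
  have nac : φ a ≠ φ c := fun h => hac (hφ h)
  have nbc : φ b ≠ φ c := fun h => hbc (hφ h)
  have e1 : ({a, b, c} : Finset K) = {b, a, c} := Finset.insert_comm a b {c}
  have e2 : ({a, b, c} : Finset K) = {c, a, b} := by
    rw [Finset.insert_comm c a, Finset.pair_comm c b]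
  have e3 : ({a, b, c} : Finset K) = {a, c, b} := by rw [Finset.pair_comm c b]
  rcases ha with ha | ha | ha <;> rcases hb with hb | hb | hb <;> rcases hc with hc | hc | hc <;>
    first
    | exact absurd (ha.trans hb.symm) nab
    | exact absurd (ha.trans hc.symm) nac
    | exact absurd (hb.trans hc.symm) nbc
    | (refine ⟨a, b, c, hab, hac, hbc, rfl, Or.inl ⟨?_, ha, hb, hc⟩⟩
       simp [Finset.filter_insert, Finset.filter_singleton, ha, hb, hc, hab, hac, hbc]; done)
    | (refine ⟨a, b, c, hab, hac, hbc, rfl, Or.inr (Or.inl ⟨?_, ha, hb, hc⟩)⟩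
       simp [Finset.filter_insert, Finset.filter_singleton, ha, hb, hc, hab, hac, hbc, hab.symm,
         hac.symm, hbc.symm]; done)
    | (refine ⟨b, a, c, hab.symm, hbc, hac, e1, Or.inr (Or.inl ⟨?_, hb, ha, hc⟩)⟩
       simp [Finset.filter_insert, Finset.filter_singleton, ha, hb, hc, hab, hac, hbc, hab.symm,
         hac.symm, hbc.symm]; done)
    | (refine ⟨c, a, b, hac.symm, hbc.symm, hab, e2, Or.inr (Or.inl ⟨?_, hc, ha, hb⟩)⟩
       simp [Finset.filter_insert, Finset.filter_singleton, ha, hb, hc, hab, hac, hbc, hab.symm,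
         hac.symm, hbc.symm]; done)
    | (refine ⟨a, b, c, hab, hac, hbc, rfl, Or.inr (Or.inr ⟨?_, ha, hb, hc⟩)⟩
       simp [Finset.filter_insert, Finset.filter_singleton, ha, hb, hc, hab, hac, hbc, hab.symm,
         hac.symm, hbc.symm]; done)
    | (refine ⟨a, c, b, hac, hab, hbc.symm, e3, Or.inr (Or.inr ⟨?_, ha, hc, hb⟩)⟩
       simp [Finset.filter_insert, Finset.filter_singleton, ha, hb, hc, hab, hac, hbc, hab.symm,
         hac.symm, hbc.symm]; done)

lemma aux_count {k K : Type*} [Field k] [DecidableEq k] [Field K] [Algebra k K] [DecidableEq K]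
    (φ : K →ₐ[k] K) (hfix : ∀ x, φ x = x → ∃ c : k, algebraMap k K c = x)
    (f : k[X]) (hf : f ≠ 0) :
    f.roots.toFinset.card = ((f.aroots K).toFinset.filter (fun x => φ x = x)).card := by
  rw [← Finset.card_image_of_injective _ (algebraMap k K).injective]
  congr 1
  ext x
  simp only [Finset.mem_image, Multiset.mem_toFinset, mem_roots hf, Finset.mem_filter,
    mem_aroots, IsRoot.def]
  constructor
  · rintro ⟨c, hc, rfl⟩
    exact ⟨⟨hf, by rw [aeval_algebraMap_apply]; simp [hc]⟩, φ.commutes c⟩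
  · rintro ⟨⟨-, h⟩, hx⟩
    obtain ⟨c, rfl⟩ := hfix x hx
    refine ⟨c, ?_, rfl⟩
    rw [aeval_algebraMap_apply] at h
    simpa using h

/-- The four coefficients of the Moebius map, multiplied by the Vandermonde of `a, b, c`. -/
lemma aux_moebius {K : Type*} [Field K] (a b c u v w : K) (hab : a ≠ b) (hac : a ≠ c)
    (hbc : b ≠ c) (huv : u ≠ v) (huw : u ≠ w) (hvw : v ≠ w) :
    ∃ p q r s : K, p * s - q * r ≠ 0 ∧ p * a + q = u * (r * a + s) ∧
      p * b + q = v * (r * b + s) ∧ p * c + q = w * (r * c + s) ∧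
      ∀ φ : K →+* K,
        ((φ a = a ∧ φ b = b ∧ φ c = c) ∧ (φ u = u ∧ φ v = v ∧ φ w = w) ∨
         (φ a = a ∧ φ b = c ∧ φ c = b) ∧ (φ u = u ∧ φ v = w ∧ φ w = v) ∨
         (φ a = b ∧ φ b = c ∧ φ c = a) ∧ (φ u = v ∧ φ v = w ∧ φ w = u)) →
        φ p = p ∧ φ q = q ∧ φ r = r ∧ φ s = s := by
  have hD : (a - b) * (a - c) * (b - c) ≠ 0 :=
    mul_ne_zero (mul_ne_zero (sub_ne_zero.2 hab) (sub_ne_zero.2 hac)) (sub_ne_zero.2 hbc)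
  have hE : (u - v) * (u - w) * (v - w) ≠ 0 :=
    mul_ne_zero (mul_ne_zero (sub_ne_zero.2 huv) (sub_ne_zero.2 huw)) (sub_ne_zero.2 hvw)
  refine ⟨((a-b) * (a-c) * (b-c) * (1 * (-(b * v)) * (-w) + (-(a * u)) * (-v) * 1 + (-u) * 1 * (-(c * w)) - 1 * (-v) * (-(c * w)) - (-(a * u)) * 1 * (-w) - (-u) * (-(b * v)) * 1)), ((a-b) * (a-c) * (b-c) * (-1) * (a * (-(b * v)) * (-w) + (-(a * u)) * (-v) * c + (-u) * b * (-(c * w)) - a * (-v) * (-(c * w)) - (-(a * u)) * b * (-w) - (-u) * (-(b * v)) * c)), ((a-b) * (a-c) * (b-c) * (a * 1 * (-w) + 1 * (-v) * c + (-u) * b * 1 - a * (-v) * 1 - 1 * b * (-w) - (-u) * 1 * c)), ((a-b) * (a-c) * (b-c) * (-1) * (a * 1 * (-(c * w)) + 1 * (-(b * v)) * c + (-(a * u)) * b * 1 - a * (-(b * v)) * 1 - 1 * b * (-(c * w)) - (-(a * u)) * 1 * c)), ?_, ?_, ?_, ?_, ?_⟩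
  · have := mul_ne_zero (pow_ne_zero 3 hD) hE
    first
    | (convert this using 1; ring)
    | (convert neg_ne_zero.2 this using 1; ring)
  · ring
  · ring
  · ring
  · rintro φ (⟨⟨h1, h2, h3⟩, h4, h5, h6⟩ | ⟨⟨h1, h2, h3⟩, h4, h5, h6⟩ | ⟨⟨h1, h2, h3⟩, h4, h5, h6⟩) <;>
      simp only [map_mul, map_sub, map_add, map_neg, map_one, h1, h2, h3, h4, h5, h6] <;>
      refine ⟨?_, ?_, ?_, ?_⟩ <;> first | trivial | ring1

/- STATEMENT 0.  Let `k` be a (finite) field and `f, g` separable cubic polynomials in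
`k[x]`.  There is a linear fractional transformation defined over `k` (an element of
`PGL₂(k)`, represented by an invertible matrix `M`) mapping the set of roots of `f` in
an algebraic closure bijectively onto the set of roots of `g` — the roots being affine,
the transformation does not send any root to `∞`, i.e. its denominator does not vanish
at any root — if and only if `f` and `g` have the same number of roots in `k`. -/
theorem stmt0 (k : Type*) [Field k] [Fintype k] [DecidableEq k]
    (f g : k[X]) (hf : f.Separable) (hg : g.Separable)
    (hfd : f.natDegree = 3) (hgd : g.natDegree = 3) :
    (∃ M : Matrix (Fin 2) (Fin 2) k, M.det ≠ 0 ∧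
      (∀ x : AlgebraicClosure k, aeval x f = 0 →
        algebraMap k (AlgebraicClosure k) (M 1 0) * x +
          algebraMap k (AlgebraicClosure k) (M 1 1) ≠ 0) ∧
      Set.BijOn
        (fun x : AlgebraicClosure k =>
          (algebraMap k (AlgebraicClosure k) (M 0 0) * x +
              algebraMap k (AlgebraicClosure k) (M 0 1)) /
            (algebraMap k (AlgebraicClosure k) (M 1 0) * x +
              algebraMap k (AlgebraicClosure k) (M 1 1)))
        {x | aeval x f = 0} {x | aeval x g = 0}) ↔
    f.roots.toFinset.card = g.roots.toFinset.card := by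
  classical
  set K := AlgebraicClosure k with hK
  let φ : K →ₐ[k] K := FiniteField.frobeniusAlgHom k K
  have hφ : Function.Injective φ := φ.toRingHom.injective
  have hfix : ∀ x, φ x = x → ∃ c : k, algebraMap k K c = x := fun x hx => aux_fix k K x hx
  have key : ∀ h : k[X], h.Separable → h.natDegree = 3 →
      ∃ S : Finset K, S.card = 3 ∧ (∀ x, x ∈ S ↔ aeval x h = 0) ∧ (∀ x ∈ S, φ x ∈ S) ∧
        h.roots.toFinset.card = (S.filter (fun x => φ x = x)).card := by
    intro h hs hd
    have h0 : h ≠ 0 := by rintro rfl; simp at hd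
    have hmem : ∀ x, x ∈ (h.aroots K).toFinset ↔ aeval x h = 0 := by
      intro x; simp [h0]
    refine ⟨(h.aroots K).toFinset, ?_, hmem, ?_, aux_count φ hfix h h0⟩
    · rw [← hd, ← card_rootSet_eq_natDegree (K := K) hs (IsAlgClosed.splits _)]
      simp_rw [rootSet_def, Finset.coe_sort_coe, Fintype.card_coe]
    · intro x hx
      rw [hmem] at hx ⊢
      rw [aeval_algHom_apply, hx, map_zero]
  obtain ⟨S, hS3, hS, hSφ, hSn⟩ := key f hf hfd
  obtain ⟨T, hT3, hT, hTφ, hTn⟩ := key g hg hgd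
  rw [hSn, hTn]
  constructor
  · rintro ⟨M, -, hden, hmaps, hinj, hsurj⟩
    have hcomm : ∀ x, φ ((algebraMap k K (M 0 0) * x + algebraMap k K (M 0 1)) /
        (algebraMap k K (M 1 0) * x + algebraMap k K (M 1 1))) =
        (algebraMap k K (M 0 0) * φ x + algebraMap k K (M 0 1)) /
        (algebraMap k K (M 1 0) * φ x + algebraMap k K (M 1 1)) := by
      intro x
      simp only [map_div₀, map_add, map_mul, AlgHom.commutes]
    refine Finset.card_bij (fun x _ => (algebraMap k K (M 0 0) * x + algebraMap k K (M 0 1)) /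
        (algebraMap k K (M 1 0) * x + algebraMap k K (M 1 1))) ?_ ?_ ?_
    · intro x hx
      rw [Finset.mem_filter] at hx ⊢
      refine ⟨(hT _).2 (hmaps ((hS x).1 hx.1)), ?_⟩
      rw [hcomm, hx.2]
    · intro x hx y hy hxy
      rw [Finset.mem_filter] at hx hy
      exact hinj ((hS x).1 hx.1) ((hS y).1 hy.1) hxy
    · intro y hy
      rw [Finset.mem_filter] at hy
      obtain ⟨x, hx, hxy⟩ := hsurj ((hT y).1 hy.1)
      have hxS := (hS x).2 hx
      refine ⟨x, Finset.mem_filter.2 ⟨hxS, ?_⟩, hxy⟩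
      apply hinj ((hS _).1 (hSφ x hxS)) hx
      have := hcomm x
      simp only at hxy ⊢
      rw [← this, hxy, hy.2]
  · intro hn
    obtain ⟨a, b, c, hab, hac, hbc, rfl, hA⟩ := aux_order φ hφ S hS3 hSφ
    obtain ⟨u, v, w, huv, huw, hvw, rfl, hB⟩ := aux_order φ hφ T hT3 hTφ
    obtain ⟨p, q, r, s, hdet, e1, e2, e3, hinv⟩ := aux_moebius a b c u v w hab hac hbc huv huw hvw
    obtain ⟨i1, i2, i3, i4⟩ := hinv φ.toRingHom (by
      rw [hn] at hA
      rcases hA with ⟨n1, hA⟩ | ⟨n1, hA⟩ | ⟨n1, hA⟩ <;>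
      rcases hB with ⟨n2, hB⟩ | ⟨n2, hB⟩ | ⟨n2, hB⟩ <;>
      first
      | (exfalso; omega)
      | exact Or.inl ⟨hA, hB⟩
      | exact Or.inr (Or.inl ⟨hA, hB⟩)
      | exact Or.inr (Or.inr ⟨hA, hB⟩))
    obtain ⟨p, rfl⟩ := hfix p i1
    obtain ⟨q, rfl⟩ := hfix q i2
    obtain ⟨r, rfl⟩ := hfix r i3
    obtain ⟨s, rfl⟩ := hfix s i4
    have hne : ∀ x y : K, algebraMap k K p * x + algebraMap k K q =
        y * (algebraMap k K r * x + algebraMap k K s) →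
        algebraMap k K r * x + algebraMap k K s ≠ 0 := by
      intro x y h h0
      rw [h0, mul_zero] at h
      by_cases hr : algebraMap k K r = 0
      · rw [hr] at h0 hdet
        simp only [zero_mul, zero_add] at h0
        apply hdet
        rw [h0]; ring
      · apply hdet
        linear_combination algebraMap k K p * h0 - algebraMap k K r * h
    have d1 := hne a u e1
    have d2 := hne b v e2
    have d3 := hne c w e3
    have hSf : ∀ x, aeval x f = 0 ↔ x = a ∨ x = b ∨ x = c := by
      intro x; rw [← hS]; simp
    have hTg : ∀ x, aeval x g = 0 ↔ x = u ∨ x = v ∨ x = w := by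
      intro x; rw [← hT]; simp
    have f1 := (div_eq_iff d1).2 e1
    have f2 := (div_eq_iff d2).2 e2
    have f3 := (div_eq_iff d3).2 e3
    refine ⟨!![p, q; r, s], ?_, ?_, ?_, ?_, ?_⟩
    · rw [Matrix.det_fin_two_of]
      intro h
      apply hdet
      rw [← map_mul, ← map_mul, ← map_sub, h, map_zero]
    · intro x hx
      rcases (hSf x).1 hx with rfl | rfl | rfl
      · exact d1
      · exact d2
      · exact d3
    · intro x hx
      refine (hTg _).2 ?_
      rcases (hSf x).1 hx with rfl | rfl | rfl
      · exact Or.inl f1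
      · exact Or.inr (Or.inl f2)
      · exact Or.inr (Or.inr f3)
    · intro x hx y hy hxy
      replace hxy : (algebraMap k K p * x + algebraMap k K q) /
        (algebraMap k K r * x + algebraMap k K s) = (algebraMap k K p * y + algebraMap k K q) /
        (algebraMap k K r * y + algebraMap k K s) := hxy
      rcases (hSf x).1 hx with h | h | h <;> rcases (hSf y).1 hy with h' | h' | h' <;>
        rw [h, h'] at hxy ⊢ <;> simp only [f1, f2, f3] at hxy <;> exfalso <;>
        first
        | exact huv hxy
        | exact huw hxy
        | exact hvw hxy
        | exact huv hxy.symm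
        | exact huw hxy.symm
        | exact hvw hxy.symm
    · intro y hy
      rcases (hTg y).1 hy with rfl | rfl | rfl
      · exact ⟨a, (hSf a).2 (by simp), f1⟩
      · exact ⟨b, (hSf b).2 (by simp), f2⟩
      · exact ⟨c, (hSf c).2 (by simp), f3⟩
end

section
/- Let k be a finite field and f a separable cubic polynomial in k[x]. Let n(f) be the number of automorphisms of P^1_k (elements of PGL_2(k)) that permute the set of roots of f. Then n(f) = 3 if f has no root in k, n(f) = 2 if f has exactly one root in k, and n(f) = 6 if f has three roots in k. -/
open Polynomial
lemma sol_nondeg {K : Type*} [Field K] (x y : Fin 3 → K) (hx : Function.Injective x)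
    (hy : Function.Injective y) (a b c d : K)
    (h : ∀ i, a * x i + b = y i * (c * x i + d)) (hne : ¬ (a = 0 ∧ b = 0 ∧ c = 0 ∧ d = 0)) :
    a * d - b * c ≠ 0 ∧ ∀ i, c * x i + d ≠ 0 := by
  have key : a * d - b * c ≠ 0 := by
    intro hdet
    have h01 : x 0 ≠ x 1 := fun h => by simpa using hx h
    have h02 : x 0 ≠ x 2 := fun h => by simpa using hx h
    have h12 : x 1 ≠ x 2 := fun h => by simpa using hx h
    have g01 : y 0 ≠ y 1 := fun h => by simpa using hy h
    have g02 : y 0 ≠ y 2 := fun h => by simpa using hy h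
    have g12 : y 1 ≠ y 2 := fun h => by simpa using hy h
    have e : ∀ i j, (y i - y j) * ((c * x i + d) * (c * x j + d)) = 0 := by
      intro i j
      linear_combination -(c * x j + d) * h i + (c * x i + d) * h j + (x i - x j) * hdet
    have e01 := (mul_eq_zero.1 (e 0 1)).resolve_left (sub_ne_zero.2 g01)
    have e02 := (mul_eq_zero.1 (e 0 2)).resolve_left (sub_ne_zero.2 g02)
    have e12 := (mul_eq_zero.1 (e 1 2)).resolve_left (sub_ne_zero.2 g12)
    have fin : ∀ i j, x i ≠ x j → c * x i + d = 0 → c * x j + d = 0 → False := by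
      intro i j hij hi hj
      have hc : c = 0 := by
        have : c * (x i - x j) = 0 := by linear_combination hi - hj
        exact (mul_eq_zero.1 this).resolve_right (sub_ne_zero.2 hij)
      have hi2 := h i
      have hj2 := h j
      rw [hi] at hi2
      rw [hj] at hj2
      have ha : a = 0 := by
        have : a * (x i - x j) = 0 := by linear_combination hi2 - hj2
        exact (mul_eq_zero.1 this).resolve_right (sub_ne_zero.2 hij)
      subst hc ha
      apply hne
      simp at hi hi2
      simp [hi, hi2]
    rcases mul_eq_zero.1 e01 with p | p <;> rcases mul_eq_zero.1 e02 with r | r <;>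
      rcases mul_eq_zero.1 e12 with s | s <;>
      first
        | exact fin _ _ h01 ‹_› ‹_›
        | exact fin _ _ h02 ‹_› ‹_›
        | exact fin _ _ h12 ‹_› ‹_›
  refine ⟨key, fun i hi => ?_⟩
  have h2 := h i
  rw [hi, mul_zero] at h2
  have hc : (a * d - b * c) = 0 := by linear_combination a * hi - c * h2
  exact key hc

lemma sol_unique {K : Type*} [Field K] (x y : Fin 3 → K) (hx : Function.Injective x)
    (hy : Function.Injective y) (a b c d a' b' c' d' : K)
    (h : ∀ i, a * x i + b = y i * (c * x i + d)) (hne : ¬ (a = 0 ∧ b = 0 ∧ c = 0 ∧ d = 0))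
    (h' : ∀ i, a' * x i + b' = y i * (c' * x i + d')) :
    ∃ t : K, a' = t * a ∧ b' = t * b ∧ c' = t * c ∧ d' = t * d := by
  have h0 := (sol_nondeg x y hx hy a b c d h hne).2 0
  refine ⟨(c' * x 0 + d') / (c * x 0 + d), ?_⟩
  set t := (c' * x 0 + d') / (c * x 0 + d) with ht
  have ht' : t * (c * x 0 + d) = c' * x 0 + d' := div_mul_cancel₀ _ h0
  by_contra hcon
  have := (sol_nondeg x y hx hy (a' - t * a) (b' - t * b) (c' - t * c) (d' - t * d)
    (fun i => by linear_combination h' i - t * h i) (by simpa [sub_eq_zero] using hcon)).2 0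
  apply this
  linear_combination -ht'

lemma sol_exists {K : Type*} [Field K] (x y : Fin 3 → K) :
    ∃ a b c d : K, (∀ i, a * x i + b = y i * (c * x i + d)) ∧
      ¬ (a = 0 ∧ b = 0 ∧ c = 0 ∧ d = 0) := by
  let F : (Fin 4 → K) →ₗ[K] (Fin 3 → K) :=
    Matrix.mulVecLin (Matrix.of fun i => ![x i, 1, -(y i * x i), - y i])
  have hF : LinearMap.ker F ≠ ⊥ := LinearMap.ker_ne_bot_of_finrank_lt (by simp)
  obtain ⟨v, hv, hv0⟩ := (Submodule.ne_bot_iff _).1 hF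
  refine ⟨v 0, v 1, v 2, v 3, fun i => ?_, fun ⟨h0, h1, h2, h3⟩ => hv0 ?_⟩
  · have := congrFun (LinearMap.mem_ker.1 hv) i
    simp [F, Matrix.mulVec, dotProduct, Fin.sum_univ_four] at this
    linear_combination this
  · ext i
    fin_cases i <;> simpa

lemma mem_of_pow_card {k K : Type*} [Field k] [Fintype k] [Field K] [Algebra k K] (z : K)
    (hz : z ^ Fintype.card k = z) : ∃ a : k, algebraMap k K a = z := by
  classical
  have h1 : 1 < Fintype.card k := Fintype.one_lt_card
  have hne : (X ^ Fintype.card k - X : K[X]) ≠ 0 := FiniteField.X_pow_card_sub_X_ne_zero K h1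
  have hsub : (Finset.univ.image (algebraMap k K)) ⊆ (X ^ Fintype.card k - X : K[X]).roots.toFinset := by
    intro w hw
    obtain ⟨a, -, rfl⟩ := Finset.mem_image.1 hw
    simp [hne, ← map_pow, FiniteField.pow_card]
  have hcard : (X ^ Fintype.card k - X : K[X]).roots.toFinset.card ≤
      (Finset.univ.image (algebraMap k K)).card := by
    rw [Finset.card_image_of_injective _ (algebraMap k K).injective, Finset.card_univ]
    refine (Multiset.toFinset_card_le _).trans ((card_roots' _).trans ?_)
    rw [FiniteField.X_pow_card_sub_X_natDegree_eq K h1]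
  have heq := Finset.eq_of_subset_of_card_le hsub hcard
  have : z ∈ (X ^ Fintype.card k - X : K[X]).roots.toFinset := by
    simp [hne, hz]
  rw [← heq] at this
  simpa using this

lemma sol_descend {k K : Type*} [Field k] [Fintype k] [Field K] [Algebra k K]
    (x y : Fin 3 → K) (hx : Function.Injective x) (hy : Function.Injective y)
    (σ : Equiv.Perm (Fin 3)) (hσ : ∀ i, x (σ i) = x i ^ Fintype.card k)
    (hσ' : ∀ i, y (σ i) = y i ^ Fintype.card k) :
    ∃ a b c d : k, a * d - b * c ≠ 0 ∧
      ∀ i, algebraMap k K a * x i + algebraMap k K b =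
        y i * (algebraMap k K c * x i + algebraMap k K d) := by
  obtain ⟨a, b, c, d, h, hne⟩ := sol_exists x y
  have norm : ∃ a b c d : K, (∀ i, a * x i + b = y i * (c * x i + d)) ∧
      (a = 1 ∨ b = 1 ∨ c = 1 ∨ d = 1) := by
    have sc : ∀ s : K, ∀ i, (s * a) * x i + s * b = y i * ((s * c) * x i + s * d) := fun s i => by
      linear_combination s * h i
    by_cases ha : a = 0
    · by_cases hb : b = 0
      · by_cases hc : c = 0
        · have hd : d ≠ 0 := fun hd => hne ⟨ha, hb, hc, hd⟩
          exact ⟨_, _, _, _, sc d⁻¹, by simp [hd]⟩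
        · exact ⟨_, _, _, _, sc c⁻¹, by simp [hc]⟩
      · exact ⟨_, _, _, _, sc b⁻¹, by simp [hb]⟩
    · exact ⟨_, _, _, _, sc a⁻¹, by simp [ha]⟩
  clear! a b c d
  obtain ⟨a, b, c, d, h, h1⟩ := norm
  have hne : ¬ (a = 0 ∧ b = 0 ∧ c = 0 ∧ d = 0) := by
    rintro ⟨rfl, rfl, rfl, rfl⟩; simp at h1
  let φ := FiniteField.frobeniusAlgHom k K
  have hφ : ∀ z, φ z = z ^ Fintype.card k := fun z => rfl
  obtain ⟨t, ta, tb, tc, td⟩ := sol_unique x y hx hy a b c d (φ a) (φ b) (φ c) (φ d) h hne (by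
    intro i
    obtain ⟨j, rfl⟩ := σ.surjective i
    rw [hσ, hσ', ← hφ, ← hφ, ← map_mul, ← map_mul, ← map_add, ← map_add, ← map_mul, h])
  have ht : t = 1 := by
    rcases h1 with rfl | rfl | rfl | rfl
    · simpa using ta.symm
    · simpa using tb.symm
    · simpa using tc.symm
    · simpa using td.symm
  subst ht
  rw [one_mul, hφ] at ta tb tc td
  obtain ⟨a, rfl⟩ := mem_of_pow_card a ta
  obtain ⟨b, rfl⟩ := mem_of_pow_card b tb
  obtain ⟨c, rfl⟩ := mem_of_pow_card c tc
  obtain ⟨d, rfl⟩ := mem_of_pow_card d td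
  refine ⟨a, b, c, d, fun hd => (sol_nondeg x y hx hy _ _ _ _ h hne).1 ?_, h⟩
  rw [← map_mul, ← map_mul, ← map_sub, hd, map_zero]

lemma mk_eq_iff {k : Type*} [Field k] (M N : Matrix.GeneralLinearGroup (Fin 2) k) :
    ((QuotientGroup.mk M : Matrix.GeneralLinearGroup (Fin 2) k ⧸
        Subgroup.center (Matrix.GeneralLinearGroup (Fin 2) k)) = QuotientGroup.mk N) ↔
      ∃ t : k, ∀ i j, N.val i j = t * M.val i j := by
  rw [QuotientGroup.eq, Matrix.GeneralLinearGroup.mem_center_iff_val_mem_range_scalar]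
  constructor
  · rintro ⟨t, ht⟩
    refine ⟨t, fun i j => ?_⟩
    have : N.val = M.val * (M⁻¹ * N).val := by rw [← Units.val_mul]; simp
    rw [this, ← ht]
    simp [mul_comm]
  · rintro ⟨t, ht⟩
    refine ⟨t, ?_⟩
    have : N.val = M.val * Matrix.scalar (Fin 2) t := by
      ext i j
      simp [ht, mul_comm]
    rw [Units.val_mul, this, ← mul_assoc, ← Units.val_mul]
    simp

lemma perm_count (σ : Equiv.Perm (Fin 3)) :
    ((Finset.univ.filter fun i => σ i = i).card = 0 →
      Fintype.card {π : Equiv.Perm (Fin 3) // ∀ i, π (σ i) = σ (π i)} = 3) ∧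
    ((Finset.univ.filter fun i => σ i = i).card = 1 →
      Fintype.card {π : Equiv.Perm (Fin 3) // ∀ i, π (σ i) = σ (π i)} = 2) ∧
    ((Finset.univ.filter fun i => σ i = i).card = 3 →
      Fintype.card {π : Equiv.Perm (Fin 3) // ∀ i, π (σ i) = σ (π i)} = 6) := by
  revert σ
  decide

theorem stmt1 (k : Type*) [Field k] [Fintype k] [DecidableEq k]
    (f : k[X]) (hf : f.Separable) (hfd : f.natDegree = 3)
    (n : ℕ)
    (hn : n = Nat.card {T : Matrix.GeneralLinearGroup (Fin 2) k ⧸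
        Subgroup.center (Matrix.GeneralLinearGroup (Fin 2) k) //
      ∃ M : Matrix.GeneralLinearGroup (Fin 2) k, QuotientGroup.mk M = T ∧
        (∀ x : AlgebraicClosure k, aeval x f = 0 →
          algebraMap k (AlgebraicClosure k) (M.val 1 0) * x +
            algebraMap k (AlgebraicClosure k) (M.val 1 1) ≠ 0) ∧
        Set.BijOn
          (fun x : AlgebraicClosure k =>
            (algebraMap k (AlgebraicClosure k) (M.val 0 0) * x +
                algebraMap k (AlgebraicClosure k) (M.val 0 1)) /
              (algebraMap k (AlgebraicClosure k) (M.val 1 0) * x +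
                algebraMap k (AlgebraicClosure k) (M.val 1 1)))
          {x | aeval x f = 0} {x | aeval x f = 0}}) :
    (f.roots.toFinset.card = 0 → n = 3) ∧
    (f.roots.toFinset.card = 1 → n = 2) ∧
    (f.roots.toFinset.card = 3 → n = 6) := by
  classical
  let K := AlgebraicClosure k
  have hf0 : f ≠ 0 := by rintro rfl; simp at hfd
  -- enumerate the roots
  have hcard : Fintype.card (f.rootSet K) = 3 := by
    rw [card_rootSet_eq_natDegree hf (IsAlgClosed.splits _), hfd]
  let e : Fin 3 ≃ f.rootSet K := (Fintype.equivFinOfCardEq hcard).symm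
  let x : Fin 3 → K := fun i => (e i : K)
  have hx : Function.Injective x := Subtype.val_injective.comp e.injective
  have hxr : ∀ i, aeval (x i) f = 0 := fun i => ((mem_rootSet.1 (e i).2).2)
  have hxs : ∀ z : K, aeval z f = 0 → ∃ i, x i = z := fun z hz =>
    ⟨e.symm ⟨z, mem_rootSet.2 ⟨hf0, hz⟩⟩, by simp [x]⟩
  let φ := FiniteField.frobeniusAlgHom k K
  have hφ : ∀ z, φ z = z ^ Fintype.card k := fun z => rfl
  have hφa : ∀ a : k, φ (algebraMap k K a) = algebraMap k K a := fun a => φ.commutes a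
  have hφr : ∀ i, ∃ j, x j = φ (x i) := fun i => hxs _ (by
    rw [aeval_algHom_apply, hxr, map_zero])
  choose s hs using hφr
  have hsinj : Function.Injective s := by
    intro i j hij
    apply hx
    apply φ.toRingHom.injective
    change φ (x i) = φ (x j)
    rw [← hs, ← hs, hij]
  let σ : Equiv.Perm (Fin 3) := Equiv.ofBijective s (Finite.injective_iff_bijective.1 hsinj)
  have hσ : ∀ i, x (σ i) = φ (x i) := hs
  -- fixed points are rational roots
  have hfix : f.roots.toFinset.card = (Finset.univ.filter fun i => σ i = i).card := by
    have himg : f.roots.toFinset.image (algebraMap k K) =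
        (Finset.univ.filter fun i => σ i = i).image x := by
      ext z
      simp only [Finset.mem_image, Multiset.mem_toFinset, mem_roots hf0, Finset.mem_filter,
        Finset.mem_univ, true_and]
      constructor
      · rintro ⟨a, ha, rfl⟩
        obtain ⟨i, hi⟩ := hxs (algebraMap k K a) (by
          rw [aeval_algebraMap_apply, coe_aeval_eq_eval, ha.eq_zero, map_zero])
        refine ⟨i, hx ?_, hi⟩
        rw [hσ, hi, hφa]
      · rintro ⟨i, hi, rfl⟩
        have h1 := hσ i
        rw [hi, hφ] at h1
        obtain ⟨a, ha⟩ := mem_of_pow_card (k := k) (x i) h1.symm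
        refine ⟨a, ?_, ha⟩
        have h2 := hxr i
        rw [← ha, aeval_algebraMap_apply, coe_aeval_eq_eval] at h2
        exact (map_eq_zero _).1 h2
    rw [← Finset.card_image_of_injective _ (algebraMap k K).injective, himg,
      Finset.card_image_of_injective _ hx]
  rw [hfix]
  suffices hmain : n = Fintype.card {π : Equiv.Perm (Fin 3) // ∀ i, π (σ i) = σ (π i)} by
    rw [hmain]
    exact perm_count σ
  rw [hn, ← Nat.card_eq_fintype_card]
  symm
  have hex : ∀ π : {π : Equiv.Perm (Fin 3) // ∀ i, π (σ i) = σ (π i)},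
      ∃ M : Matrix.GeneralLinearGroup (Fin 2) k, ∀ i,
        algebraMap k K (M.val 0 0) * x i + algebraMap k K (M.val 0 1) =
        x (π.1 i) * (algebraMap k K (M.val 1 0) * x i + algebraMap k K (M.val 1 1)) := by
    rintro ⟨π, hπ⟩
    obtain ⟨a, b, c, d, hdet, h⟩ := sol_descend (k := k) x (fun i => x (π i)) hx
      (hx.comp π.injective) σ hσ (fun i => by rw [hπ, hσ, hφ])
    exact ⟨Matrix.GeneralLinearGroup.mkOfDetNeZero !![a, b; c, d]
      (by rwa [Matrix.det_fin_two_of]), fun i => by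
        simpa [Matrix.GeneralLinearGroup.mkOfDetNeZero] using! h i⟩
  have hGL : ∀ M : Matrix.GeneralLinearGroup (Fin 2) k,
      ¬ (algebraMap k K (M.val 0 0) = 0 ∧ algebraMap k K (M.val 0 1) = 0 ∧
        algebraMap k K (M.val 1 0) = 0 ∧ algebraMap k K (M.val 1 1) = 0) := by
    rintro M ⟨h1, -, h3, -⟩
    have hd : M.val.det ≠ 0 := M.det.ne_zero
    rw [map_eq_zero] at h1 h3
    rw [Matrix.det_fin_two, h1, h3] at hd
    simp at hd
  choose F hF using hex
  have hFden : ∀ π i, algebraMap k K ((F π).val 1 0) * x i + algebraMap k K ((F π).val 1 1) ≠ 0 :=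
    fun π => (sol_nondeg x (fun i => x (π.1 i)) hx (hx.comp π.1.injective) _ _ _ _ (hF π)
      (hGL _)).2
  have hFdiv : ∀ π i, (algebraMap k K ((F π).val 0 0) * x i + algebraMap k K ((F π).val 0 1)) /
      (algebraMap k K ((F π).val 1 0) * x i + algebraMap k K ((F π).val 1 1)) = x (π.1 i) :=
    fun π i => by rw [hF, mul_div_cancel_right₀ _ (hFden π i)]
  refine Nat.card_eq_of_bijective (fun π => ⟨QuotientGroup.mk (F π), F π, rfl, ?_, ?_, ?_, ?_⟩)
    ⟨?_, ?_⟩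
  · intro z hz
    obtain ⟨i, rfl⟩ := hxs z hz
    exact hFden π i
  · intro z hz
    obtain ⟨i, rfl⟩ := hxs z hz
    change aeval (_ / _) f = 0
    exact (congrArg (fun w => aeval w f) (hFdiv π i)).trans (hxr _)
  · intro z hz w hw hzw
    obtain ⟨i, rfl⟩ := hxs z hz
    obtain ⟨j, rfl⟩ := hxs w hw
    have := (hFdiv π i).symm.trans (hzw.trans (hFdiv π j))
    rw [π.1.injective (hx this)]
  · intro z hz
    obtain ⟨i, rfl⟩ := hxs z hz
    refine ⟨x (π.1.symm i), hxr _, ?_⟩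
    exact (hFdiv π _).trans (by simp)
  · intro π ρ h
    obtain ⟨t, ht⟩ := (mk_eq_iff _ _).1 (Subtype.ext_iff.1 h)
    ext i : 2
    apply hx
    have h1 := hF π i
    have h2 := hF ρ i
    have h3 := hFden ρ i
    simp only [ht, map_mul] at h2 h3
    refine mul_right_cancel₀ h3 ?_
    rw [← h2]
    linear_combination (-algebraMap k K t) * h1
  · rintro ⟨T, M, rfl, hden, hmaps, hinj, hsurj⟩
    have hp : ∀ i, ∃ j, x j = (algebraMap k K (M.val 0 0) * x i + algebraMap k K (M.val 0 1)) /
        (algebraMap k K (M.val 1 0) * x i + algebraMap k K (M.val 1 1)) :=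
      fun i => hxs _ (hmaps (hxr i))
    choose p hp using hp
    have hpinj : Function.Injective p := by
      intro i j hij
      apply hx
      refine hinj (hxr i) (hxr j) ?_
      exact (hp i).symm.trans ((congrArg x hij).trans (hp j))
    let π : Equiv.Perm (Fin 3) := Equiv.ofBijective p (Finite.injective_iff_bijective.1 hpinj)
    have hπ : ∀ i, x (π i) = (algebraMap k K (M.val 0 0) * x i + algebraMap k K (M.val 0 1)) /
        (algebraMap k K (M.val 1 0) * x i + algebraMap k K (M.val 1 1)) := hp
    have hcomm : ∀ i, π (σ i) = σ (π i) := by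
      intro i
      apply hx
      rw [hσ, hπ, hπ, hσ, map_div₀, map_add, map_add, map_mul, map_mul, hφa, hφa, hφa, hφa]
    refine ⟨⟨π, hcomm⟩, Subtype.ext ?_⟩
    symm
    refine (mk_eq_iff _ _).2 ?_
    have hM : ∀ i, algebraMap k K (M.val 0 0) * x i + algebraMap k K (M.val 0 1) =
        x (π i) * (algebraMap k K (M.val 1 0) * x i + algebraMap k K (M.val 1 1)) := fun i => by
      rw [hπ, div_mul_cancel₀ _ (hden _ (hxr i))]
    obtain ⟨t, h1, h2, h3, h4⟩ := sol_unique x (fun i => x (π i)) hx (hx.comp π.injective)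
      _ _ _ _ _ _ _ _ hM (hGL M) (hF ⟨π, hcomm⟩)
    -- the scalar lies in k, by fixing a nonzero entry
    have ht : t ^ Fintype.card k = t := by
      have key : ∀ u v : k, algebraMap k K v = t * algebraMap k K u → u ≠ 0 → φ t = t := by
        intro u v huv hu
        have hu' : algebraMap k K u ≠ 0 := by simpa using hu
        have h := congrArg φ huv
        rw [map_mul, hφa, hφa, huv] at h
        exact (mul_right_cancel₀ hu' h).symm
      by_contra hcon
      refine hGL M ⟨?_, ?_, ?_, ?_⟩ <;> rw [map_eq_zero] <;> by_contra hu
      · exact hcon (key _ _ h1 hu)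
      · exact hcon (key _ _ h2 hu)
      · exact hcon (key _ _ h3 hu)
      · exact hcon (key _ _ h4 hu)
    obtain ⟨t, rfl⟩ := mem_of_pow_card (k := k) t ht
    refine ⟨t, ?_⟩
    rw [← map_mul] at h1 h2 h3 h4
    have inj := (algebraMap k K).injective
    intro i j
    fin_cases i <;> fin_cases j
    · exact inj h1
    · exact inj h2
    · exact inj h3
    · exact inj h4
end

section
/- Let K be an imaginary quadratic field of discriminant Δ and let H be the quaternion algebra over Q generated by the twisted diagonal embedding of K into M_2(K) together with the element i = [[0,-1],[1,0]] (so that i^2 = -1 and αi = iᾱ). Then a rational prime p is unramified in H if and only if -1 is a norm from K ⊗ Q_p to Q_p. Consequently, H is ramified exactly at infinity, at the odd prime divisors of Δ congruent to 3 mod 4, and at 2 if Δ is even and Δ is not congruent to 8 mod 32. -/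
open scoped Quaternion


lemma quat_unit_of_norm {F : Type*} [Field F] (D : F) (x : ℍ[F, -1, D])
    (h : x.re ^ 2 + x.imI ^ 2 - D * (x.imJ ^ 2 + x.imK ^ 2) ≠ 0) : IsUnit x := by
  set n := x.re ^ 2 + x.imI ^ 2 - D * (x.imJ ^ 2 + x.imK ^ 2) with hn
  refine ⟨⟨x, ⟨x.re / n, -x.imI / n, -x.imJ / n, -x.imK / n⟩, ?_, ?_⟩, rfl⟩
  all_goals
    ext <;> simp <;> field_simp <;> simp only [hn] <;> ring

lemma quat_not_unit {F : Type*} [Field F] (D : F) (x : ℍ[F, -1, D]) (hx : x ≠ 0)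
    (h : x.re ^ 2 + x.imI ^ 2 - D * (x.imJ ^ 2 + x.imK ^ 2) = 0) : ¬ IsUnit x := by
  intro hu
  have h1 : x * ⟨x.re, -x.imI, -x.imJ, -x.imK⟩ = 0 := by
    ext
    · simp
      linear_combination h
    all_goals
      simp
      ring
  have h2 := hu.mul_right_eq_zero.1 h1
  apply hx
  have e1 := congrArg QuaternionAlgebra.re h2
  have e2 := congrArg QuaternionAlgebra.imI h2
  have e3 := congrArg QuaternionAlgebra.imJ h2
  have e4 := congrArg QuaternionAlgebra.imK h2
  simp at e1 e2 e3 e4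
  ext <;> simpa

lemma sq_sum_zero {F : Type*} [Field F] (D x y : F) (h : x ^ 2 + y ^ 2 = 0)
    (hne : ¬ (x = 0 ∧ y = 0)) : ∃ a b : F, a ^ 2 - D * b ^ 2 = -1 := by
  have hx : x ≠ 0 := by
    rintro rfl
    apply hne
    simpa using h
  refine ⟨y / x, 0, ?_⟩
  field_simp
  linear_combination h

lemma sum_two_to_norm {F : Type*} [Field F] (D u v : F) (hD : D ≠ 0) (h : D = u ^ 2 + v ^ 2) :
    ∃ a b : F, a ^ 2 - D * b ^ 2 = -1 := by
  by_cases hv : v = 0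
  · subst hv
    have hu : u ≠ 0 := by
      rintro rfl
      simp at h
      exact hD h
    refine ⟨0, 1 / u, ?_⟩
    field_simp
    linear_combination -h
  · refine ⟨u / v, 1 / v, ?_⟩
    field_simp
    linear_combination -h

lemma norm_to_sum_two {F : Type*} [Field F] (h2 : (2 : F) ≠ 0) (D a b : F)
    (h : a ^ 2 - D * b ^ 2 = -1) : ∃ u v : F, D = u ^ 2 + v ^ 2 := by
  by_cases hb : b = 0
  · subst hb
    refine ⟨(D + 1) / 2, a * (D - 1) / 2, ?_⟩
    field_simp
    linear_combination -(D - 1) ^ 2 * h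
  · refine ⟨a / b, 1 / b, ?_⟩
    field_simp
    linear_combination -h

lemma part_one {F : Type*} [Field F] (D : F) (hD : D ≠ 0) :
    (∃ a b : F, a ^ 2 - D * b ^ 2 = -1) ↔ ¬ (∀ x : ℍ[F, -1, D], x ≠ 0 → IsUnit x) := by
  constructor
  · rintro ⟨a, b, h⟩ H
    have hne : (⟨1, a, b, 0⟩ : ℍ[F, -1, D]) ≠ 0 := by
      intro h0
      have := congrArg QuaternionAlgebra.re h0
      simp at this
    refine quat_not_unit D _ hne ?_ (H _ hne)
    simp
    linear_combination h
  · intro H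
    push Not at H
    obtain ⟨x, hx, hu⟩ := H
    have hN : x.re ^ 2 + x.imI ^ 2 - D * (x.imJ ^ 2 + x.imK ^ 2) = 0 := by
      by_contra h
      exact hu (quat_unit_of_norm D x h)
    by_cases h34 : x.imJ ^ 2 + x.imK ^ 2 = 0
    · by_cases h34' : x.imJ = 0 ∧ x.imK = 0
      · refine sq_sum_zero D x.re x.imI (by rw [h34] at hN; simpa using hN) ?_
        rintro ⟨h1, h2⟩
        exact hx (by ext <;> simp [h1, h2, h34'.1, h34'.2])
      · exact sq_sum_zero D _ _ h34 h34'
    · refine sum_two_to_norm D ((x.re * x.imJ + x.imI * x.imK) / (x.imJ ^ 2 + x.imK ^ 2))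
        ((x.imI * x.imJ - x.re * x.imK) / (x.imJ ^ 2 + x.imK ^ 2)) hD ?_
      rw [div_pow, div_pow, ← add_div, eq_div_iff (pow_ne_zero 2 h34)]
      linear_combination -(x.imJ ^ 2 + x.imK ^ 2) * hN

lemma part_two (D : ℝ) (hD : D < 0) (x : ℍ[ℝ, -1, D]) (hx : x ≠ 0) : IsUnit x := by
  apply quat_unit_of_norm
  intro h
  apply hx
  have h1 := sq_nonneg x.re
  have h2 := sq_nonneg x.imI
  have h3 := mul_nonneg (neg_pos.2 hD).le (sq_nonneg x.imJ)
  have h4 := mul_nonneg (neg_pos.2 hD).le (sq_nonneg x.imK)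
  have e1 : x.re ^ 2 = 0 := by nlinarith
  have e2 : x.imI ^ 2 = 0 := by nlinarith
  have e3 : -D * x.imJ ^ 2 = 0 := by nlinarith
  have e4 : -D * x.imK ^ 2 = 0 := by nlinarith
  have := hD.ne
  ext <;> simp_all

lemma padic_sqrt (p : ℕ) [Fact p.Prime] (c a : ℤ_[p]) (h : ‖a ^ 2 - c‖ < ‖2 * a‖ ^ 2) :
    ∃ z : ℤ_[p], z ^ 2 = c := by
  have := hensels_lemma (p := p) (F := (Polynomial.X ^ 2 - Polynomial.C c : Polynomial ℤ_[p])) (a := a)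
    (by simpa [Polynomial.derivative_X_pow, one_add_one_eq_two] using h)
  obtain ⟨z, hz, -⟩ := this
  exact ⟨z, by simpa [sub_eq_zero] using hz⟩

lemma odd_sqrt (p : ℕ) [Fact p.Prime] (hp : p ≠ 2) (c a : ℤ) (h : (a : ZMod p) ^ 2 = c)
    (ha : (a : ZMod p) ≠ 0) : ∃ z : ℚ_[p], z ^ 2 = c := by
  obtain ⟨z, hz⟩ := padic_sqrt p c a (by
    have hpp : p.Prime := Fact.out
    have e1 : ‖((a ^ 2 - c : ℤ) : ℤ_[p])‖ < 1 := by
      rw [PadicInt.norm_int_lt_one_iff_dvd, ← ZMod.intCast_zmod_eq_zero_iff_dvd]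
      push_cast
      rw [h, sub_self]
    have e2 : ‖((2 * a : ℤ) : ℤ_[p])‖ = 1 := by
      refine le_antisymm (PadicInt.norm_le_one _) (not_lt.1 ?_)
      rw [PadicInt.norm_int_lt_one_iff_dvd, ← ZMod.intCast_zmod_eq_zero_iff_dvd]
      push_cast
      exact mul_ne_zero (by
        intro h2
        have : ((2 : ℕ) : ZMod p) = 0 := by exact_mod_cast h2
        rw [ZMod.natCast_eq_zero_iff] at this
        exact hp ((Nat.prime_dvd_prime_iff_eq hpp Nat.prime_two).1 this)) ha
    push_cast at e1 e2
    rw [e2]; simpa using e1)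
  exact ⟨z, by exact_mod_cast congrArg (fun x : ℤ_[p] => (x : ℚ_[p])) hz⟩

lemma two_sqrt (c : ℤ) (h : c % 8 = 1) : ∃ z : ℚ_[2], z ^ 2 = c := by
  obtain ⟨z, hz⟩ := padic_sqrt 2 c 1 (by
    have e1 : ‖((1 - c : ℤ) : ℤ_[2])‖ ≤ (2 : ℕ) ^ (-(3 : ℕ) : ℤ) := by
      rw [PadicInt.norm_int_le_pow_iff_dvd]
      norm_num; omega
    push_cast at e1
    have e2 : ‖(2 : ℤ_[2])‖ = 2⁻¹ := by
      simpa using PadicInt.norm_p (p := 2)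
    rw [one_pow, mul_one, e2]
    refine lt_of_le_of_lt e1 ?_
    norm_num)
  exact ⟨z, by exact_mod_cast congrArg (fun x : ℤ_[2] => (x : ℚ_[2])) hz⟩

lemma integral_of_sum (p : ℕ) [Fact p.Prime] (D : ℤ)
    (H : ∀ w t : ℤ_[p], (D : ℤ_[p]) * (p * t) ^ 2 ≠ 1 + w ^ 2) (u v : ℚ_[p])
    (h : (D : ℚ_[p]) = u ^ 2 + v ^ 2) (huv : ‖v‖ ≤ ‖u‖) : ‖u‖ ≤ 1 := by
  by_contra hu
  push Not at hu
  have hu0 : u ≠ 0 := by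
    rintro rfl
    simp at hu
    linarith
  have hw : ‖v / u‖ ≤ 1 := by
    rw [norm_div]
    exact div_le_one_of_le₀ huv (norm_nonneg _)
  have ht : ‖u⁻¹‖ < 1 := by
    rw [norm_inv]
    exact inv_lt_one_of_one_lt₀ hu
  obtain ⟨t, ht'⟩ : ∃ t : ℤ_[p], (t : ℚ_[p]) = u⁻¹ := ⟨⟨u⁻¹, ht.le⟩, rfl⟩
  obtain ⟨w, hw'⟩ : ∃ t : ℤ_[p], (t : ℚ_[p]) = v / u := ⟨⟨v / u, hw⟩, rfl⟩
  obtain ⟨s, hs⟩ : (p : ℤ_[p]) ∣ t := by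
    rw [← PadicInt.norm_lt_one_iff_dvd, PadicInt.norm_def, ht']
    exact ht
  apply H w s
  rw [← hs]
  apply Subtype.ext
  push_cast
  rw [ht', hw']
  rw [h]
  field_simp

lemma integral_of_sum' (p : ℕ) [Fact p.Prime] (D : ℤ)
    (H : ∀ w t : ℤ_[p], (D : ℤ_[p]) * (p * t) ^ 2 ≠ 1 + w ^ 2) (u v : ℚ_[p])
    (h : (D : ℚ_[p]) = u ^ 2 + v ^ 2) : ∃ x y : ℤ_[p], (D : ℤ_[p]) = x ^ 2 + y ^ 2 := by
  have : ‖u‖ ≤ 1 ∧ ‖v‖ ≤ 1 := by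
    rcases le_total ‖v‖ ‖u‖ with h1 | h1
    · have := integral_of_sum p D H u v h h1
      exact ⟨this, h1.trans this⟩
    · have := integral_of_sum p D H v u (by rw [h, add_comm]) h1
      exact ⟨h1.trans this, this⟩
  refine ⟨⟨u, this.1⟩, ⟨v, this.2⟩, ?_⟩
  apply Subtype.ext
  push_cast
  exact h

lemma not_sum_two (m : ℤ) (hm : m % 4 = 3 ∨ m % 8 = 6) (u v : ℚ_[2])
    (h : (m : ℚ_[2]) = u ^ 2 + v ^ 2) : False := by
  obtain ⟨x, y, hxy⟩ := integral_of_sum' 2 m (by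
    intro w t hwt
    have := congrArg (PadicInt.toZModPow 3) hwt
    simp only [map_mul, map_add, map_pow, map_one, map_intCast, map_natCast] at this
    generalize PadicInt.toZModPow 3 w = w' at this
    generalize PadicInt.toZModPow 3 t = t' at this
    generalize ((m : ℤ) : ZMod (2 ^ 3)) = m' at this
    revert w' t' m'
    decide) u v h
  have := congrArg (PadicInt.toZModPow 3) hxy
  simp only [map_add, map_pow, map_intCast] at this
  have hm' : (m : ZMod (2 ^ 3)) = 3 ∨ (m : ZMod (2 ^ 3)) = 7 ∨ (m : ZMod (2 ^ 3)) = 6 := by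
    have : m % 8 = 3 ∨ m % 8 = 7 ∨ m % 8 = 6 := by omega
    have e : (m : ZMod (2 ^ 3)) = ((m % 8 : ℤ) : ZMod (2 ^ 3)) := by
      have := ZMod.intCast_mod m (2 ^ 3)
      rw [← this]; norm_num
    rw [e]
    rcases this with h | h | h <;> rw [h] <;> decide
  generalize PadicInt.toZModPow 3 x = w' at this
  generalize PadicInt.toZModPow 3 y = t' at this
  generalize ((m : ℤ) : ZMod (2 ^ 3)) = m' at this hm'
  revert w' t' m'
  decide

lemma not_sum_odd (p : ℕ) [Fact p.Prime] (hp : p % 4 = 3) (D : ℤ) (h1 : (p : ℤ) ∣ D)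
    (h2 : ¬ (p : ℤ) ^ 2 ∣ D) (u v : ℚ_[p]) (h : (D : ℚ_[p]) = u ^ 2 + v ^ 2) : False := by
  have hns : ¬ IsSquare (-1 : ZMod p) := by
    rw [ZMod.exists_sq_eq_neg_one_iff]
    simpa using hp
  obtain ⟨x, y, hxy⟩ := integral_of_sum' p D (by
    intro w t hwt
    have := congrArg (PadicInt.toZMod) hwt
    simp at this
    exact hns ⟨PadicInt.toZMod w, by linear_combination this⟩) u v h
  have hm := congrArg (PadicInt.toZMod) hxy
  simp only [map_add, map_pow, map_intCast] at hm
  rw [(ZMod.intCast_zmod_eq_zero_iff_dvd D p).2 h1] at hm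
  have hx : PadicInt.toZMod x = 0 := by
    by_contra hx
    refine hns ⟨PadicInt.toZMod y / PadicInt.toZMod x, ?_⟩
    field_simp
    linear_combination hm
  have hy : PadicInt.toZMod y = 0 := by
    rw [hx] at hm
    simpa using hm.symm
  have key : ∀ z : ℤ_[p], PadicInt.toZMod z = 0 → (p : ℤ_[p]) ∣ z := by
    intro z hz
    rw [← RingHom.mem_ker, PadicInt.ker_toZMod, PadicInt.maximalIdeal_eq_span_p,
      Ideal.mem_span_singleton] at hz
    exact hz
  obtain ⟨x, rfl⟩ := key x hx
  obtain ⟨y, rfl⟩ := key y hy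
  apply h2
  have : ‖(D : ℤ_[p])‖ ≤ (p : ℝ) ^ (-(2 : ℕ) : ℤ) := by
    rw [PadicInt.norm_le_pow_iff_mem_span_pow, Ideal.mem_span_singleton]
    exact ⟨x ^ 2 + y ^ 2, by rw [hxy]; ring⟩
  rw [PadicInt.norm_int_le_pow_iff_dvd] at this
  exact_mod_cast this

lemma sum_odd (p : ℕ) [Fact p.Prime] (hp : p ≠ 2) (D : ℤ) (h1 : ¬ (p : ℤ) ∣ D) :
    ∃ u v : ℚ_[p], (D : ℚ_[p]) = u ^ 2 + v ^ 2 := by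
  obtain ⟨a, b, hab⟩ := ZMod.sq_add_sq p (D : ZMod p)
  rw [← ZMod.intCast_zmod_eq_zero_iff_dvd] at h1
  obtain ⟨a, rfl⟩ := ZMod.intCast_surjective a
  obtain ⟨b, rfl⟩ := ZMod.intCast_surjective b
  by_cases ha : (a : ZMod p) = 0
  · have hb : (b : ZMod p) ≠ 0 := by
      intro hb
      rw [ha, hb] at hab
      exact h1 (by rw [← hab]; simp)
    obtain ⟨z, hz⟩ := odd_sqrt p hp (D - a ^ 2) b (by push_cast; rw [← hab]; ring) hb
    exact ⟨a, z, by rw [hz]; push_cast; ring⟩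
  · obtain ⟨z, hz⟩ := odd_sqrt p hp (D - b ^ 2) a (by push_cast; rw [← hab]; ring) ha
    exact ⟨z, b, by rw [hz]; push_cast; ring⟩

lemma local_iff (Δ : ℤ) (h0 : Δ ≠ 0) (h4 : Δ % 4 = 1 ∨ Δ % 16 = 8 ∨ Δ % 16 = 12)
    (hsq : ∀ p : ℕ, p.Prime → p ≠ 2 → ¬ (p : ℤ) ^ 2 ∣ Δ) (p : ℕ) [hpf : Fact p.Prime] :
    (¬ ∃ a b : ℚ_[p], a ^ 2 - (Δ : ℚ_[p]) * b ^ 2 = -1) ↔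
        ((p % 4 = 3 ∧ (p : ℤ) ∣ Δ) ∨ (p = 2 ∧ Even Δ ∧ ¬ Δ % 32 = 8)) := by
  have hD : (Δ : ℚ_[p]) ≠ 0 := by exact_mod_cast h0
  have hpp : p.Prime := Fact.out
  constructor
  · intro h
    by_contra hc
    push Not at hc
    obtain ⟨hc1, hc2⟩ := hc
    apply h
    by_cases hp2 : p = 2
    · subst hp2
      have hc3 := hc2 rfl
      rcases Int.emod_two_eq_zero_or_one Δ with he | ho
      · have h32 := hc3 (Int.even_iff.2 he)
        obtain ⟨z, hz⟩ := two_sqrt (Δ / 4 - 1) (by omega)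
        refine sum_two_to_norm _ (2 * z) 2 hD ?_
        obtain ⟨k, rfl⟩ : (4 : ℤ) ∣ Δ := by omega
        rw [mul_pow, hz, Int.mul_ediv_cancel_left _ (by norm_num)]
        push_cast
        ring
      · have : Δ % 8 = 1 ∨ Δ % 8 = 5 := by omega
        rcases this with h8 | h8
        · obtain ⟨z, hz⟩ := two_sqrt Δ h8
          exact sum_two_to_norm _ z 0 hD (by rw [hz]; ring)
        · obtain ⟨z, hz⟩ := two_sqrt (Δ - 4) (by omega)
          exact sum_two_to_norm _ z 2 hD (by rw [hz]; push_cast; ring)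
    · by_cases hd : (p : ℤ) ∣ Δ
      · have h3 : p % 4 ≠ 3 := fun h => hc1 h hd
        obtain ⟨a, ha⟩ := ZMod.exists_sq_eq_neg_one_iff.2 h3
        obtain ⟨a, rfl⟩ := ZMod.intCast_surjective a
        obtain ⟨z, hz⟩ := odd_sqrt p hp2 (-1) a (by push_cast; rw [ha]; ring) (by
          intro h0
          rw [h0] at ha
          simp at ha)
        exact ⟨z, 0, by rw [hz]; push_cast; ring⟩
      · obtain ⟨u, v, huv⟩ := sum_odd p hp2 Δ hd
        exact sum_two_to_norm _ u v hD huv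
  · rintro h ⟨a, b, hab⟩
    obtain ⟨u, v, huv⟩ := norm_to_sum_two two_ne_zero _ a b hab
    rcases h with ⟨hp, hd⟩ | ⟨rfl, he, h32⟩
    · exact not_sum_odd p hp Δ hd (hsq p hpp (by rintro rfl; omega)) u v huv
    · rw [Int.even_iff] at he
      refine not_sum_two (Δ / 4) (by omega) (u / 2) (v / 2) ?_
      obtain ⟨k, rfl⟩ : (4 : ℤ) ∣ Δ := by omega
      rw [Int.mul_ediv_cancel_left _ (by norm_num)]
      push_cast at huv
      field_simp
      linear_combination huv

section NF

open NumberField Module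

lemma dvd_of_quad {K : Type*} [Field K] [NumberField K] (β : 𝓞 K) (k s r : ℤ) (hk : k ≠ 0)
    (h : β ^ 2 = k * s * β + k ^ 2 * r) : ∃ γ : 𝓞 K, β = k * γ := by
  have hkK : (k : K) ≠ 0 := by exact_mod_cast hk
  have hK : (β : K) ^ 2 = k * s * β + k ^ 2 * r := by
    have := congrArg (algebraMap (𝓞 K) K) h
    simpa using this
  have hint : IsIntegral ℤ ((β : K) / k) := by
    refine ⟨Polynomial.X ^ 2 - (Polynomial.C s * Polynomial.X + Polynomial.C r), ?_, ?_⟩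
    · apply Polynomial.monic_X_pow_sub
      compute_degree!
    · simp only [Polynomial.eval₂_sub, Polynomial.eval₂_add, Polynomial.eval₂_mul,
        Polynomial.eval₂_pow, Polynomial.eval₂_X, Polynomial.eval₂_C]
      simp only [eq_intCast]
      field_simp
      linear_combination hK
  obtain ⟨γ, hγ⟩ : ∃ γ : 𝓞 K, (γ : K) = (β : K) / k := ⟨⟨(β : K) / k, hint⟩, rfl⟩
  refine ⟨γ, ?_⟩
  apply RingOfIntegers.coe_injective
  have hγ' : algebraMap (𝓞 K) K γ = algebraMap (𝓞 K) K β / k := hγ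
  rw [map_mul, map_intCast, hγ']
  field_simp

lemma exists_basis {K : Type*} [Field K] [NumberField K] (hdeg : finrank ℚ K = 2) :
    ∃ c : Basis (Fin 2) ℤ (𝓞 K), c 0 = 1 := by
  have hr : finrank ℤ (𝓞 K) = 2 := by rw [RingOfIntegers.rank, hdeg]
  let b : Basis (Fin 2) ℤ (𝓞 K) := (finBasis ℤ (𝓞 K)).reindex (finCongr hr)
  set x := b.repr 1 0 with hx
  set y := b.repr 1 1 with hy
  have h1 : (1 : 𝓞 K) = x • b 0 + y • b 1 := by
    have := b.sum_repr 1
    rw [Fin.sum_univ_two] at this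
    exact this.symm
  have hg : IsCoprime x y := by
    rw [Int.isCoprime_iff_gcd_eq_one]
    obtain ⟨x', hx'⟩ := Int.gcd_dvd_left x y
    obtain ⟨y', hy'⟩ := Int.gcd_dvd_right x y
    have h2 : b 0 = (Int.gcd x y : ℤ) • ((x' • b 0 + y' • b 1) * b 0) := by
      rw [← smul_mul_assoc, smul_add, smul_smul, smul_smul, ← hx', ← hy', ← h1, one_mul]
    have h3 := congrArg (fun z => b.repr z 0) h2
    simp only [map_smul, Finsupp.smul_apply, Basis.repr_self, Finsupp.single_eq_same,
      smul_eq_mul] at h3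
    have h4 : (Int.gcd x y : ℤ) ∣ 1 := ⟨_, h3⟩
    exact Nat.dvd_one.1 (by exact_mod_cast h4)
  obtain ⟨s, r, hsr⟩ := hg
  have hli : LinearIndependent ℤ ![(1 : 𝓞 K), (-r) • b 0 + s • b 1] := by
    rw [LinearIndependent.pair_iff]
    intro m n hmn
    have e0 := congrArg (fun z => b.repr z 0) hmn
    have e1 := congrArg (fun z => b.repr z 1) hmn
    rw [h1] at e0 e1
    simp only [map_add, map_smul, map_zero, Finsupp.add_apply, Finsupp.smul_apply, Basis.repr_self, Finsupp.zero_apply,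
      Finsupp.single_apply, smul_eq_mul] at e0 e1
    norm_num at e0 e1
    constructor
    · linear_combination s * e0 + r * e1 - m * hsr
    · linear_combination x * e1 - y * e0 - n * hsr
  refine ⟨Basis.mk hli ?_, ?_⟩
  · have hb0 : b 0 = s • (1 : 𝓞 K) + (-y) • ((-r) • b 0 + s • b 1) := by
      rw [h1]
      have : (s * x + r * y) • b 0 = b 0 := by rw [hsr, one_smul]
      nth_rewrite 1 [← this]
      module
    have hb1 : b 1 = r • (1 : 𝓞 K) + x • ((-r) • b 0 + s • b 1) := by
      rw [h1]
      have : (s * x + r * y) • b 1 = b 1 := by rw [hsr, one_smul]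
      nth_rewrite 1 [← this]
      module
    rw [← b.span_eq, Submodule.span_le]
    rintro _ ⟨i, rfl⟩
    simp only [Matrix.range_cons, Matrix.range_empty, Set.union_empty, Set.singleton_union,
      SetLike.mem_coe]
    rw [Submodule.mem_span_pair]
    fin_cases i
    · exact ⟨_, _, hb0.symm⟩
    · exact ⟨_, _, hb1.symm⟩
  · simp

lemma discr_formula {K : Type*} [Field K] [NumberField K] (c : Basis (Fin 2) ℤ (𝓞 K))
    (hc : c 0 = 1) : ∃ t n : ℤ, (c 1) ^ 2 = t * c 1 - n ∧ discr K = t ^ 2 - 4 * n := by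
  set a := c.repr (c 1 * c 1) 0 with ha
  set t := c.repr (c 1 * c 1) 1 with ht
  have h1 : c 1 * c 1 = a • 1 + t • c 1 := by
    have := c.sum_repr (c 1 * c 1)
    rw [Fin.sum_univ_two, hc] at this
    exact this.symm
  refine ⟨t, -a, ?_, ?_⟩
  · rw [pow_two, h1]
    simp
    ring
  have t1 : Algebra.trace ℤ (𝓞 K) 1 = 2 := by
    rw [Algebra.trace_eq_matrix_trace c]
    simp [Matrix.trace]
  have tw : Algebra.trace ℤ (𝓞 K) (c 1) = t := by
    rw [Algebra.trace_eq_matrix_trace c, Matrix.trace, Fin.sum_univ_two]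
    simp only [Matrix.diag_apply, Algebra.leftMulMatrix_eq_repr_mul, ← ht]
    rw [hc, mul_one]
    simp
  have tww : Algebra.trace ℤ (𝓞 K) (c 1 * c 1) = 2 * a + t * t := by
    rw [h1, map_add, map_smul, map_smul, t1, tw]
    simp
    ring
  rw [← discr_eq_discr K c, Algebra.discr_def, Matrix.det_fin_two]
  simp only [Algebra.traceMatrix_apply, Algebra.traceForm_apply, hc, one_mul, mul_one, t1, tw, tww]
  ring

lemma coord_dvd {K : Type*} [Field K] [NumberField K] (c : Basis (Fin 2) ℤ (𝓞 K))
    (hc : c 0 = 1) (u v k : ℤ) (γ : 𝓞 K) (h : u * c 1 + v = k * γ) : k ∣ u := by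
  have h' : u • c 1 + v • c 0 = k • γ := by
    rw [hc]; simpa using h
  have e := congrArg (fun z => c.repr z 1) h'
  simp only [map_add, map_smul, Finsupp.add_apply, Finsupp.smul_apply, Basis.repr_self,
    Finsupp.single_apply, smul_eq_mul] at e
  norm_num at e
  exact ⟨_, e⟩

lemma discr_fund {K : Type*} [Field K] [NumberField K] (hdeg : finrank ℚ K = 2) :
    (discr K % 4 = 1 ∨ discr K % 16 = 8 ∨ discr K % 16 = 12) ∧
    ∀ p : ℕ, p.Prime → p ≠ 2 → ¬ (p : ℤ) ^ 2 ∣ discr K := by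
  obtain ⟨c, hc⟩ := exists_basis hdeg
  obtain ⟨t, n, hw, hd⟩ := discr_formula c hc
  constructor
  · rcases Int.even_or_odd' t with ⟨s, rfl | rfl⟩
    · have hm : discr K = 4 * (s ^ 2 - n) := by rw [hd]; ring
      generalize hmm : s ^ 2 - n = m at hm
      have hn : n = s ^ 2 - m := by omega
      subst hn
      push_cast at hw
      have h0 : m % 4 ≠ 0 := by
        intro h0
        obtain ⟨r, rfl⟩ : (4 : ℤ) ∣ m := Int.dvd_of_emod_eq_zero h0
        obtain ⟨γ, hγ⟩ := dvd_of_quad (c 1 - (s : 𝓞 K)) 2 0 r (by norm_num) (by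
          push_cast at hw ⊢
          linear_combination hw)
        have := coord_dvd c hc 1 (-s) 2 γ (by rw [← hγ]; push_cast; ring)
        omega
      have h1 : m % 4 ≠ 1 := by
        intro h1
        obtain ⟨r, rfl⟩ : ∃ r : ℤ, m = 4 * r + 1 := ⟨m / 4, by omega⟩
        obtain ⟨γ, hγ⟩ := dvd_of_quad (c 1 - (s : 𝓞 K) + 1) 2 1 r (by norm_num) (by
          push_cast at hw ⊢
          linear_combination hw)
        have := coord_dvd c hc 1 (-s + 1) 2 γ (by rw [← hγ]; push_cast; ring)
        omega
      omega
    · left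
      have : discr K = 4 * (s ^ 2 + s - n) + 1 := by rw [hd]; ring
      omega
  · rintro p hp hp2 ⟨r, hr⟩
    obtain ⟨γ, hγ⟩ := dvd_of_quad (2 * c 1 - (t : 𝓞 K)) p 0 r (by exact_mod_cast hp.ne_zero) (by
      have h := congrArg (fun z : ℤ => (z : 𝓞 K)) (hd.symm.trans hr)
      push_cast at h ⊢
      linear_combination 4 * hw + h)
    have := coord_dvd c hc 2 (-t) p γ (by rw [← hγ]; push_cast; ring)
    have h2 : p ∣ 2 := by exact_mod_cast this
    exact hp2 ((Nat.prime_dvd_prime_iff_eq hp Nat.prime_two).1 h2)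

lemma discr_neg {K : Type*} [Field K] [NumberField K] (hdeg : finrank ℚ K = 2)
    (himag : IsEmpty (K →+* ℝ)) : discr K < 0 := by
  have h0 : InfinitePlace.nrRealPlaces K = 0 := by
    classical
    rw [InfinitePlace.nrRealPlaces, Fintype.card_eq_zero_iff]
    refine ⟨fun w => ?_⟩
    exact himag.false (InfinitePlace.embedding_of_isReal w.2)
  have h1 := InfinitePlace.card_add_two_mul_card_eq_rank K
  rw [h0, hdeg] at h1
  have h2 : InfinitePlace.nrComplexPlaces K = 1 := by omega
  have h3 := sign_discr K
  rw [h2, pow_one] at h3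
  exact Int.sign_eq_neg_one_iff_neg.1 h3

end NF

/- STATEMENT 4.  Let `K` be an imaginary quadratic field of discriminant `Δ`, and let
`H` be the quaternion algebra over `ℚ` generated by the twisted diagonal embedding of
`K` into `M₂(K)` together with `i = [[0,-1],[1,0]]` (so `i² = -1`, `αi = iᾱ`); with
`j = √Δ` one has `j² = Δ` and `ij = -ji`, i.e. `H ≅ (-1, Δ)_ℚ = ℍ[ℚ, -1, Δ]`.  A prime
`p` is unramified in `H` (i.e. `H ⊗ ℚ_p = ℍ[ℚ_p, -1, Δ]` is not a division ring) iff
`-1` is a norm from `K ⊗ ℚ_p = ℚ_p(√Δ)` to `ℚ_p` (i.e. `-1 = a² - Δb²` is solvable in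
`ℚ_p`).  Consequently `H` is ramified at infinity, and at a finite prime `p` exactly
when `p ≡ 3 mod 4` divides `Δ`, or `p = 2`, `Δ` is even and `Δ ≢ 8 mod 32`. -/
theorem stmt4 (K : Type*) [Field K] [NumberField K]
    (hdeg : Module.finrank ℚ K = 2) (himag : IsEmpty (K →+* ℝ))
    (Δ : ℤ) (hΔ : Δ = NumberField.discr K) :
    (∀ (p : ℕ) [Fact p.Prime],
      (∃ a b : ℚ_[p], a ^ 2 - (Δ : ℚ_[p]) * b ^ 2 = -1) ↔
        ¬ (∀ x : ℍ[ℚ_[p], -1, (Δ : ℚ_[p])], x ≠ 0 → IsUnit x)) ∧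
    (∀ x : ℍ[ℝ, -1, (Δ : ℝ)], x ≠ 0 → IsUnit x) ∧
    (∀ (p : ℕ) [Fact p.Prime],
      (∀ x : ℍ[ℚ_[p], -1, (Δ : ℚ_[p])], x ≠ 0 → IsUnit x) ↔
        ((p % 4 = 3 ∧ (p : ℤ) ∣ Δ) ∨ (p = 2 ∧ Even Δ ∧ ¬ Δ % 32 = 8))) := by
  have hneg : Δ < 0 := hΔ ▸ discr_neg hdeg himag
  have hf := discr_fund hdeg
  rw [← hΔ] at hf
  have h1 : ∀ (p : ℕ) [Fact p.Prime],
      (∃ a b : ℚ_[p], a ^ 2 - (Δ : ℚ_[p]) * b ^ 2 = -1) ↔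
        ¬ (∀ x : ℍ[ℚ_[p], -1, (Δ : ℚ_[p])], x ≠ 0 → IsUnit x) :=
    fun p _ => part_one _ (by exact_mod_cast hneg.ne)
  refine ⟨h1, part_two _ (by exact_mod_cast hneg), ?_⟩
  intro p _
  rw [← local_iff Δ hneg.ne hf.1 hf.2 p, h1 p, not_not]
end
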